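/- There exists ε₀ > 0 such that for every ε with 0 < ε < ε₀, the complement ℝ³ ∖ (⋃_{i=1}^{m} A_i ∪ ⋃_{j=1}^{m} B_j ∪ ⋃_{k=1}^{m} C_k) has at least m²(m − 1) connected components. -/

import Mathlib

open Pointwise

/-- The vertex `w(j,0) = (0, −3j, 1 − 2^{−j})`. -/
noncomputable def wJ (j : ℕ) : Fin 3 → ℝ :=
  ![0, -(3 * (j : ℝ)), 1 - (1/2 : ℝ) ^ j]

/-- The vertex `w(0,k)`: the origin for `k = 0`, the point
`(cos θ_k − 1, sin θ_k, 0)` with `θ_k = (π/3)((k−1)/m + 1)` for `1 ≤ k ≤ m+1`,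
and `(−2, 0, 0)` for `k = m+2`. -/
noncomputable def wK (m k : ℕ) : Fin 3 → ℝ :=
  if k = 0 then ![0, 0, 0]
  else if k = m + 2 then ![-2, 0, 0]
  else ![Real.cos (Real.pi / 3 * (((k : ℝ) - 1) / (m : ℝ) + 1)) - 1,
         Real.sin (Real.pi / 3 * (((k : ℝ) - 1) / (m : ℝ) + 1)), 0]

/-- The grid vertex `w(j,k) = w(j,0) + w(0,k)`. -/
noncomputable def wGrid (m j k : ℕ) : Fin 3 → ℝ := wJ j + wK m k

/-- The point `v(j,k) = (1 − j/(m+1))·w(j,k) + (j/(m+1))·w(j,k+1)`. -/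
noncomputable def vGrid (m j k : ℕ) : Fin 3 → ℝ :=
  (1 - (j : ℝ) / ((m : ℝ) + 1)) • wGrid m j k + ((j : ℝ) / ((m : ℝ) + 1)) • wGrid m j (k + 1)

/-- The point `u₁ = (−2, −3m−3, 1 − 2^{−m})`. -/
noncomputable def uOne (m : ℕ) : Fin 3 → ℝ := ![-2, -(3 * (m : ℝ)) - 3, 1 - (1/2 : ℝ) ^ m]

/-- The point `u₀ = (−2, −3m−3, 0)`. -/
noncomputable def uZero (m : ℕ) : Fin 3 → ℝ := ![-2, -(3 * (m : ℝ)) - 3, 0]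

/-- The polytope `K_m`: the convex hull of the vertices of the construction. -/
noncomputable def Km (m : ℕ) : Set (Fin 3 → ℝ) :=
  convexHull ℝ
    ({p | ∃ j ≤ m, p = wGrid m j 0} ∪ {p | ∃ j ≤ m, p = wGrid m j (m + 2)} ∪
     {p | ∃ j ≤ m, ∃ k ≤ m + 1, p = vGrid m j k} ∪
     {p | ∃ k ≤ m + 2, p = uZero m - wK m k} ∪ {p | ∃ k ≤ m + 2, p = uOne m - wK m k})

/-!
Just below the upper rim of `K_m` at height `0`, next to the chord from `w(0,k)` to `w(0,k+1)`,
each triple `(i, j, k)` yields a thin prism whose six faces are all covered: the top by `A_i`; the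
floor by `A_{i+1}`, or by `B_{j+1}` if `i = m`; the inner side by the same translate as the floor;
the outer side by `C_k`, whose face over the reflected chord lies in the same vertical plane; and
the two ends by `B_j` and `B_{j+1}`, which contain vertical segments hanging down from the chord
at `v(j,k)` and `v(j+1,k)`, shifted to height `0`. The weights `j/(m+1)` make these points
distinct. Hence each prism meets the complement in a clopen set.

Each prism also contains a point outside every translate. The only delicate case is `B_l`: a
supporting plane through `v(l,k)` and a neighbouring `v(l,k±1)` shows that the translated polytope
touches the chord only at `v(l,k)`, so it avoids the midpoint between `v(j,k)` and `v(j+1,k)`; the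
witnesses converge to this midpoint as `ε → 0`, and `B_l` is closed.
-/

namespace Km

open Set Filter Topology Real

lemma injective_connectedComponents_mk {X ι : Type*} [TopologicalSpace X] {U : ι → Set X}
    (hU : ∀ t, IsClopen (U t)) {x : ι → X} (hx : ∀ t, x t ∈ U t)
    (hinj : ∀ s t, x s ∈ U t → s = t) :
    Function.Injective fun t => ConnectedComponents.mk (x t) := fun s t hst =>
  hinj s t <| (hU t).connectedComponent_subset (hx t) <|
    ConnectedComponents.coe_eq_coe.1 hst ▸ mem_connectedComponent

lemma eq_of_mem_Ioo_of_antitoneOn {α : Type*} [Preorder α] {f : ℕ → α} {n a b : ℕ} {x : α}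
    (hf : AntitoneOn f (Iic n)) (ha : a < n) (hb : b < n) (hxa : x ∈ Ioo (f (a + 1)) (f a))
    (hxb : x ∈ Ioo (f (b + 1)) (f b)) : a = b := by
  rcases lt_trichotomy a b with h | h | h
  · exact ((hxa.1.trans hxb.2).not_ge (hf ha hb.le h)).elim
  · exact h
  · exact ((hxb.1.trans hxa.2).not_ge (hf hb ha.le h)).elim

section AffineMap

variable {𝕜 : Type*} [Field 𝕜] [LinearOrder 𝕜] [IsStrictOrderedRing 𝕜] {f g : 𝕜 →ᵃ[𝕜] 𝕜}

lemma affineMap_le_of_mem_Icc {a b x : 𝕜} (ha : f a ≤ g a) (hb : f b ≤ g b)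
    (hx : x ∈ Icc a b) : f x ≤ g x :=
  sub_nonpos.1 <| (((convex_Iic (0 : 𝕜)).affine_preimage (f - g)).ordConnected.out
    (sub_nonpos.2 ha) (sub_nonpos.2 hb) hx :)

lemma affineMap_apply_eq_add_mul (f : 𝕜 →ᵃ[𝕜] 𝕜) (x y : 𝕜) :
    f x = f y + f.linear 1 * (x - y) := by
  have h := f.linearMap_vsub x y
  rw [vsub_eq_sub, vsub_eq_sub, ← mul_one (x - y), ← smul_eq_mul, map_smul, smul_eq_mul] at h
  linarith

lemma exists_affineMap_cutting_corner {u v : 𝕜} (huv : u < v) (hu : g u < f u)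
    (hv : f v < g v) :
    ∃ h : 𝕜 →ᵃ[𝕜] 𝕜, (∀ x ≤ u, g x ≤ h x) ∧ (∀ x, v ≤ x → f x ≤ h x) ∧
      (∀ x, u < x → h x < g x) ∧ ∀ x < v, h x < f x := by
  set s := (f v - g u) / (v - u) with hs
  have hsuv : s * (v - u) = f v - g u := div_mul_cancel₀ _ (sub_pos.2 huv).ne'
  have hf x := affineMap_apply_eq_add_mul f x v
  have hg x := affineMap_apply_eq_add_mul g x u
  have slope_f : f.linear 1 < s := by
    rw [hs, lt_div_iff₀ (sub_pos.2 huv)]; linarith [hf u]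
  have slope_g : s < g.linear 1 := by
    rw [hs, div_lt_iff₀ (sub_pos.2 huv)]; linarith [hg v]
  -- the line through `(u, g u)` and `(v, f v)`
  refine ⟨s • (AffineMap.id 𝕜 𝕜 - AffineMap.const 𝕜 𝕜 u) + AffineMap.const 𝕜 𝕜 (g u),
    fun x hx => ?_, fun x hx => ?_, fun x hx => ?_, fun x hx => ?_⟩ <;>
  simp only [AffineMap.coe_add, AffineMap.coe_smul, AffineMap.coe_sub, AffineMap.coe_id,
    AffineMap.coe_const, Pi.add_apply, Pi.smul_apply, Pi.sub_apply, id_eq, Function.const_apply,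
    smul_eq_mul]
  · nlinarith [hg x]
  · nlinarith [hf x]
  · nlinarith [hg x]
  · nlinarith [hf x]

lemma vec3_mem_of_mem_Icc {s : Set (Fin 3 → 𝕜)} (hs : Convex 𝕜 s) (f g h : 𝕜 →ᵃ[𝕜] 𝕜)
    {a b x : 𝕜} (ha : ![f a, g a, h a] ∈ s) (hb : ![f b, g b, h b] ∈ s) (hx : x ∈ Icc a b) :
    ![f x, g x, h x] ∈ s := by
  have hφ y : AffineMap.pi ![f, g, h] y = ![f y, g y, h y] := by
    ext i; fin_cases i <;> rfl
  have := ((hs.affine_preimage (AffineMap.pi ![f, g, h])).ordConnected.out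
    (by rwa [mem_preimage, hφ]) (by rwa [mem_preimage, hφ]) hx)
  rwa [mem_preimage, hφ] at this

end AffineMap

section Chord

variable {α β t : ℝ}

/-- The line through the points at angles `α` and `β` of the unit circle centred at `(-1, 0)`, as
a function of the abscissa. -/
noncomputable def chord (α β : ℝ) : ℝ →ᵃ[ℝ] ℝ :=
  (-(cos ((α + β) / 2) / sin ((α + β) / 2))) • AffineMap.id ℝ ℝ +
    AffineMap.const ℝ ℝ ((cos ((β - α) / 2) - cos ((α + β) / 2)) / sin ((α + β) / 2))

lemma chord_sub_sin (h : sin ((α + β) / 2) ≠ 0) (t : ℝ) :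
    chord α β (cos t - 1) - sin t =
      (cos ((β - α) / 2) - cos (t - (α + β) / 2)) / sin ((α + β) / 2) := by
  rw [Real.cos_sub t]
  simp only [chord, AffineMap.coe_add, AffineMap.coe_smul, AffineMap.coe_id, AffineMap.coe_const,
    Pi.add_apply, Pi.smul_apply, id_eq, Function.const_apply, smul_eq_mul]
  field_simp
  ring

lemma chord_left (h : sin ((α + β) / 2) ≠ 0) : chord α β (cos α - 1) = sin α := by
  rw [← sub_eq_zero, chord_sub_sin h, ← Real.cos_neg,
    show -((β - α) / 2) = α - (α + β) / 2 by ring, sub_self, zero_div]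

lemma chord_right (h : sin ((α + β) / 2) ≠ 0) : chord α β (cos β - 1) = sin β := by
  rw [← sub_eq_zero, chord_sub_sin h, show (β - α) / 2 = β - (α + β) / 2 by ring,
    sub_self, zero_div]

lemma sin_midpoint_pos (hα : 0 ≤ α) (hαβ : α < β) (hβ : β ≤ π) : 0 < sin ((α + β) / 2) :=
  Real.sin_pos_of_pos_of_lt_pi (by linarith) (by linarith)

lemma sin_lt_chord (hα : 0 ≤ α) (hαβ : α < β) (hβ : β ≤ π) (ht : t ∈ Icc 0 π)
    (h : t < α ∨ β < t) : sin t < chord α β (cos t - 1) := by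
  have hs := sin_midpoint_pos hα hαβ hβ
  have hcos : cos (t - (α + β) / 2) < cos ((β - α) / 2) := by
    rw [← Real.cos_abs (t - (α + β) / 2)]
    refine Real.cos_lt_cos_of_nonneg_of_le_pi (by linarith) ?_ ?_
    · rw [abs_le]
      constructor <;> linarith [ht.1, ht.2]
    · rw [lt_abs]
      exact h.symm.imp (fun h => by linarith) fun h => by linarith
  rw [← sub_pos, chord_sub_sin hs.ne']
  exact div_pos (sub_pos.2 hcos) hs

end Chord

section Arc

variable {m k l : ℕ} {x : ℝ}

/-- The angle of `w(0, k)` on the unit circle centred at `(-1, 0)`; the two endpoints of the upper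
half circle are included. -/
noncomputable def angle (m k : ℕ) : ℝ :=
  if k = 0 then 0 else if k = m + 2 then π else π / 3 * (((k : ℝ) - 1) / m + 1)

@[simp] lemma angle_zero (m : ℕ) : angle m 0 = 0 := if_pos rfl

@[simp] lemma angle_last (m : ℕ) : angle m (m + 2) = π := by simp [angle]

lemma angle_lt_succ (hk : k ≤ m + 1) : angle m k < angle m (k + 1) := by
  have hπ := Real.pi_pos
  rcases k.eq_zero_or_pos with rfl | hk₀
  · rw [angle_zero, zero_add, angle, if_neg one_ne_zero, if_neg (by lia)]
    simpa using hπ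
  rw [angle, angle, if_neg hk₀.ne', if_neg (by lia), if_neg k.succ_ne_zero]
  split_ifs with hlast
  · obtain rfl : k = m + 1 := by lia
    have : ((m + 1 : ℕ) - 1 : ℝ) / m ≤ 1 := by simpa using div_self_le_one (m : ℝ)
    nlinarith
  · have hm : (0 : ℝ) < m := by exact_mod_cast (by lia : 0 < m)
    gcongr
    simp

lemma strictMonoOn_angle (m : ℕ) : StrictMonoOn (angle m) (Iic (m + 2)) :=
  strictMonoOn_of_lt_add_one ordConnected_Iic fun _ _ _ h =>
    angle_lt_succ (Nat.le_of_succ_le_succ h)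

lemma angle_mem_Icc (hk : k ≤ m + 2) : angle m k ∈ Icc 0 π := by
  rw [← angle_zero m, ← angle_last m]
  exact ⟨(strictMonoOn_angle m).monotoneOn (Nat.zero_le _) hk k.zero_le,
    (strictMonoOn_angle m).monotoneOn hk self_mem_Iic hk⟩

/-- The abscissa of `w(0, k)`. -/
noncomputable def arcX (m k : ℕ) : ℝ := cos (angle m k) - 1

/-- The ordinate of `w(0, k)`. -/
noncomputable def arcY (m k : ℕ) : ℝ := sin (angle m k)

lemma wK_eq (m k : ℕ) : wK m k = ![arcX m k, arcY m k, 0] := by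
  unfold wK arcX arcY angle
  split_ifs <;> norm_num

@[simp] lemma arcX_zero (m : ℕ) : arcX m 0 = 0 := by simp [arcX]

@[simp] lemma arcX_last (m : ℕ) : arcX m (m + 2) = -2 := by
  rw [arcX, angle_last, Real.cos_pi]; norm_num

@[simp] lemma arcY_zero (m : ℕ) : arcY m 0 = 0 := by simp [arcY]

@[simp] lemma arcY_last (m : ℕ) : arcY m (m + 2) = 0 := by simp [arcY]

lemma arcY_mem_Icc (hk : k ≤ m + 2) : arcY m k ∈ Icc 0 1 :=
  ⟨Real.sin_nonneg_of_nonneg_of_le_pi (angle_mem_Icc hk).1 (angle_mem_Icc hk).2,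
    Real.sin_le_one _⟩

lemma arcX_mem_Icc (m k : ℕ) : arcX m k ∈ Icc (-2) 0 := by
  constructor <;> unfold arcX <;>
    linarith [Real.neg_one_le_cos (angle m k), Real.cos_le_one (angle m k)]

lemma Icc_arcX_subset (m k : ℕ) : Icc (arcX m (k + 1)) (arcX m k) ⊆ Icc (-2) 0 :=
  Icc_subset_Icc (arcX_mem_Icc m _).1 (arcX_mem_Icc m _).2

lemma strictAntiOn_arcX (m : ℕ) : StrictAntiOn (arcX m) (Iic (m + 2)) := fun _ hk _ hl hkl =>
  sub_lt_sub_right (Real.strictAntiOn_cos (angle_mem_Icc hk) (angle_mem_Icc hl)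
    (strictMonoOn_angle m hk hl hkl)) _

lemma arcX_succ_lt (hk : k ≤ m + 1) : arcX m (k + 1) < arcX m k :=
  strictAntiOn_arcX m (show k ≤ m + 2 by lia) (show k + 1 ≤ m + 2 by lia) k.lt_succ_self

/-- The line through `w(0, k)` and `w(0, k + 1)`, as a function of the abscissa. -/
noncomputable def arcLine (m k : ℕ) : ℝ →ᵃ[ℝ] ℝ := chord (angle m k) (angle m (k + 1))

lemma sin_angle_midpoint_pos (hk : k ≤ m + 1) : 0 < sin ((angle m k + angle m (k + 1)) / 2) :=
  sin_midpoint_pos (angle_mem_Icc (by lia)).1 (angle_lt_succ hk) (angle_mem_Icc (by lia)).2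

lemma arcLine_left (hk : k ≤ m + 1) : arcLine m k (arcX m k) = arcY m k :=
  chord_left (sin_angle_midpoint_pos hk).ne'

lemma arcLine_right (hk : k ≤ m + 1) : arcLine m k (arcX m (k + 1)) = arcY m (k + 1) :=
  chord_right (sin_angle_midpoint_pos hk).ne'

lemma arcY_lt_arcLine (hk : k ≤ m + 1) (hl : l ≤ m + 2) (h : l < k ∨ k + 1 < l) :
    arcY m l < arcLine m k (arcX m l) :=
  sin_lt_chord (angle_mem_Icc (by lia)).1 (angle_lt_succ hk) (angle_mem_Icc (by lia)).2
    (angle_mem_Icc hl) <| h.imp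
      (fun h => strictMonoOn_angle m hl (show k ≤ m + 2 by lia) h)
      fun h => strictMonoOn_angle m (show k + 1 ≤ m + 2 by lia) hl h

lemma arcY_le_arcLine (hk : k ≤ m + 1) (hl : l ≤ m + 2) : arcY m l ≤ arcLine m k (arcX m l) := by
  by_cases h : l < k ∨ k + 1 < l
  · exact (arcY_lt_arcLine hk hl h).le
  obtain rfl | rfl : l = k ∨ l = k + 1 := by lia
  exacts [(arcLine_left hk).ge, (arcLine_right hk).ge]

lemma arcLine_nonneg (hk : k ≤ m + 1) (hx : x ∈ Icc (-2) 0) : 0 ≤ arcLine m k x :=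
  affineMap_le_of_mem_Icc (f := AffineMap.const ℝ ℝ 0)
    (by simpa using arcY_le_arcLine hk (le_refl (m + 2)))
    (by simpa using arcY_le_arcLine hk (m + 2).zero_le) hx

lemma arcLine_le_arcLine (hk : k ≤ m + 1) (hl : l ≤ m + 1)
    (hx : x ∈ Icc (arcX m (k + 1)) (arcX m k)) : arcLine m k x ≤ arcLine m l x :=
  affineMap_le_of_mem_Icc
    ((arcLine_right hk).trans_le (arcY_le_arcLine hl (by lia)))
    ((arcLine_left hk).trans_le (arcY_le_arcLine hl (by lia))) hx

lemma arcLine_le_one (hk : k ≤ m + 1) (hx : x ∈ Icc (arcX m (k + 1)) (arcX m k)) :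
    arcLine m k x ≤ 1 :=
  affineMap_le_of_mem_Icc (g := AffineMap.const ℝ ℝ 1)
    ((arcLine_right hk).trans_le (arcY_mem_Icc (by lia)).2)
    ((arcLine_left hk).trans_le (arcY_mem_Icc (by lia)).2) hx

end Arc

section CutPoint

variable {m j k l : ℕ}

lemma cutRatio_mem_Icc (hj : j ≤ m + 1) : (j : ℝ) / (m + 1) ∈ Icc 0 1 :=
  ⟨by positivity, (div_le_one (by positivity)).2 (by exact_mod_cast hj)⟩

lemma cutRatio_lt_one (hj : j ≤ m) : (j : ℝ) / (m + 1) < 1 :=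
  (div_lt_one (by positivity)).2 (by exact_mod_cast Nat.lt_succ_of_le hj)

/-- The abscissa of `v(j, k)`. -/
noncomputable def cutX (m j k : ℕ) : ℝ :=
  AffineMap.lineMap (arcX m k) (arcX m (k + 1)) ((j : ℝ) / (m + 1))

/-- The ordinate of `v(j, k)`, up to the shift by `-3j`. -/
noncomputable def cutY (m j k : ℕ) : ℝ :=
  AffineMap.lineMap (arcY m k) (arcY m (k + 1)) ((j : ℝ) / (m + 1))

lemma arcLine_cutX (hk : k ≤ m + 1) : arcLine m k (cutX m j k) = cutY m j k := by
  rw [cutX, AffineMap.apply_lineMap, arcLine_left hk, arcLine_right hk, cutY]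

lemma cutX_mem_Icc (hj : j ≤ m + 1) (hk : k ≤ m + 1) :
    cutX m j k ∈ Icc (arcX m (k + 1)) (arcX m k) :=
  (convex_Icc _ _).lineMap_mem (right_mem_Icc.2 (arcX_succ_lt hk).le)
    (left_mem_Icc.2 (arcX_succ_lt hk).le) (cutRatio_mem_Icc hj)

lemma cutX_lt_cutX (hk : k ≤ m + 1) (h : j < l) : cutX m l k < cutX m j k := by
  have ratio_lt : (j : ℝ) / (m + 1) < l / (m + 1) := by gcongr
  rw [cutX, cutX, AffineMap.lineMap_apply_ring', AffineMap.lineMap_apply_ring']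
  nlinarith [arcX_succ_lt hk]

lemma strictAntiOn_cutX (hj : j ≤ m) : StrictAntiOn (cutX m j) (Iic (m + 1)) := by
  intro k hk l hl hkl
  calc cutX m j l ≤ arcX m l := (cutX_mem_Icc (by lia) hl).2
    _ ≤ arcX m (k + 1) := (strictAntiOn_arcX m).antitoneOn (Nat.succ_le_succ hk)
        (Nat.le_succ_of_le hl) hkl
    _ < cutX m j k := (right_lt_lineMap_iff_lt (cutRatio_lt_one hj)).2 (arcX_succ_lt hk)

/-- The horizontal projections of the vertices `w(j, 0)`, `w(j, m + 2)` and `v(j, k)`, shifted by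
`3j` in the second coordinate. -/
def levelVertices (m j : ℕ) : Set (ℝ × ℝ) :=
  {(0, 0), (-2, 0)} ∪ {q | ∃ k ≤ m + 1, q = (cutX m j k, cutY m j k)}

variable {q : ℝ × ℝ}

lemma fst_mem_Icc_of_mem_levelVertices (hj : j ≤ m + 1) (hq : q ∈ levelVertices m j) :
    q.1 ∈ Icc (-2) 0 := by
  rcases hq with (rfl | rfl) | ⟨k, hk, rfl⟩
  · simp
  · simp
  · exact Icc_arcX_subset m k (cutX_mem_Icc hj hk)

lemma snd_mem_Icc_of_mem_levelVertices (hj : j ≤ m + 1) (hq : q ∈ levelVertices m j) :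
    q.2 ∈ Icc 0 1 := by
  rcases hq with (rfl | rfl) | ⟨k, hk, rfl⟩
  · simp
  · simp
  · exact (convex_Icc _ _).lineMap_mem (arcY_mem_Icc (by lia)) (arcY_mem_Icc (by lia))
      (cutRatio_mem_Icc hj)

lemma snd_le_arcLine_of_mem_levelVertices (hj : j ≤ m + 1) (hk : k ≤ m + 1)
    (hq : q ∈ levelVertices m j) : q.2 ≤ arcLine m k q.1 := by
  rcases hq with (rfl | rfl) | ⟨l, hl, rfl⟩
  · exact arcLine_nonneg hk (by simp)
  · exact arcLine_nonneg hk (by simp)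
  · exact (arcLine_cutX hl).symm.trans_le (arcLine_le_arcLine hl hk (cutX_mem_Icc hj hl))

lemma fst_le_or_le_fst_of_mem_levelVertices (hj : j ≤ m) (hk : k ≤ m)
    (hq : q ∈ levelVertices m j) : q.1 ≤ cutX m j (k + 1) ∨ cutX m j k ≤ q.1 := by
  have anti := (strictAntiOn_cutX hj).antitoneOn
  rcases hq with (rfl | rfl) | ⟨l, hl, rfl⟩
  · exact .inr ((cutX_mem_Icc (by lia) (by lia)).2.trans (arcX_mem_Icc m k).2)
  · exact .inl ((arcX_mem_Icc m (k + 2)).1.trans (cutX_mem_Icc (by lia) (by lia)).1)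
  · rcases lt_or_ge k l with h | h
    · exact .inl (anti (show k + 1 ≤ m + 1 by lia) hl h)
    · exact .inr (anti hl (show k ≤ m + 1 by lia) h)

lemma exists_affineMap_above_levelVertices (hj : 1 ≤ j) (hjm : j ≤ m) (hk : k ≤ m) :
    ∃ h : ℝ →ᵃ[ℝ] ℝ, (∀ q ∈ levelVertices m j, q.2 ≤ h q.1) ∧
      (∀ x, cutX m j (k + 1) < x → h x < arcLine m (k + 1) x) ∧
      ∀ x < cutX m j k, h x < arcLine m k x := by
  have next_lt : arcLine m (k + 1) (cutX m j (k + 1)) < arcLine m k (cutX m j (k + 1)) := by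
    rw [arcLine_cutX (by lia), cutX, AffineMap.apply_lineMap, arcLine_right (by lia), cutY]
    exact lineMap_strict_mono_right (arcY_lt_arcLine (by lia) (by lia) (by lia)) (by positivity)
  have prev_lt : arcLine m k (cutX m j k) < arcLine m (k + 1) (cutX m j k) := by
    rw [arcLine_cutX (by lia), cutX, AffineMap.apply_lineMap, arcLine_left (by lia), cutY]
    exact lineMap_strict_mono_left (arcY_lt_arcLine (by lia) (by lia) (by lia))
      (cutRatio_lt_one hjm)
  obtain ⟨h, next_le, prev_le, lt_next, lt_prev⟩ := exists_affineMap_cutting_corner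
    (strictAntiOn_cutX hjm (show k ≤ m + 1 by lia) (show k + 1 ≤ m + 1 by lia) k.lt_succ_self)
    next_lt prev_lt
  refine ⟨h, fun q hq => ?_, lt_next, lt_prev⟩
  rcases fst_le_or_le_fst_of_mem_levelVertices hjm hk hq with hq' | hq'
  · exact (snd_le_arcLine_of_mem_levelVertices (by lia) (by lia) hq).trans (next_le _ hq')
  · exact (snd_le_arcLine_of_mem_levelVertices (by lia) (by lia) hq).trans (prev_le _ hq')

end CutPoint

section Polytope

variable {m j k l : ℕ} {p : Fin 3 → ℝ} {x y z : ℝ}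

/-- The height `1 - 2⁻ʲ` of the vertices `w(j, k)` and `v(j, k)`. -/
noncomputable def level (j : ℕ) : ℝ := 1 - (1 / 2 : ℝ) ^ j

@[simp] lemma level_zero : level 0 = 0 := by simp [level]

lemma level_succ (j : ℕ) : level (j + 1) = level j + (1 / 2 : ℝ) ^ (j + 1) := by
  rw [level, level, pow_succ]; ring

lemma monotone_level : Monotone level := fun _ _ h =>
  sub_le_sub_left (pow_le_pow_of_le_one (by norm_num) (by norm_num) h) 1

lemma level_nonneg (j : ℕ) : 0 ≤ level j := level_zero ▸ monotone_level j.zero_le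

lemma level_le_self (j : ℕ) : level j ≤ j := by
  induction j with
  | zero => simp
  | succ j ih =>
    rw [level_succ, Nat.cast_succ]
    exact add_le_add ih (pow_le_one₀ (by norm_num) (by norm_num))

lemma wGrid_eq (m j k : ℕ) : wGrid m j k = ![arcX m k, arcY m k - 3 * j, level j] := by
  rw [wGrid, wJ, wK_eq, level]
  ext i; fin_cases i <;> simp [sub_eq_neg_add]

lemma vGrid_eq (m j k : ℕ) : vGrid m j k = ![cutX m j k, cutY m j k - 3 * j, level j] := by
  rw [vGrid, wGrid_eq, wGrid_eq]
  ext i; fin_cases i <;> simp [cutX, cutY, AffineMap.lineMap_apply_ring] <;> ring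

lemma convex_Km (m : ℕ) : Convex ℝ (Km m) := convex_convexHull ℝ _

lemma isClosed_Km (m : ℕ) : IsClosed (Km m) := by
  refine Set.Finite.isClosed_convexHull ℝ ((((Finite.union ?_ ?_).union ?_).union ?_).union ?_)
  · exact ((finite_Iic m).image fun j => wGrid m j 0).subset fun p ⟨j, hj, hp⟩ => ⟨j, hj, hp.symm⟩
  · exact ((finite_Iic m).image fun j => wGrid m j (m + 2)).subset
      fun p ⟨j, hj, hp⟩ => ⟨j, hj, hp.symm⟩
  · exact (((finite_Iic m).prod (finite_Iic (m + 1))).image fun t => vGrid m t.1 t.2).subset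
      fun p ⟨j, hj, k, hk, hp⟩ => ⟨(j, k), ⟨hj, hk⟩, hp.symm⟩
  · exact ((finite_Iic (m + 2)).image fun k => uZero m - wK m k).subset
      fun p ⟨k, hk, hp⟩ => ⟨k, hk, hp.symm⟩
  · exact ((finite_Iic (m + 2)).image fun k => uOne m - wK m k).subset
      fun p ⟨k, hk, hp⟩ => ⟨k, hk, hp.symm⟩

lemma uZero_sub_wK (m k : ℕ) :
    uZero m - wK m k = ![-2 - arcX m k, -(3 * m) - 3 - arcY m k, 0] := by
  rw [uZero, wK_eq]; ext i; fin_cases i <;> simp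

lemma uOne_sub_wK (m k : ℕ) :
    uOne m - wK m k = ![-2 - arcX m k, -(3 * m) - 3 - arcY m k, level m] := by
  rw [uOne, wK_eq, level]; ext i; fin_cases i <;> simp

lemma level_vertex_mem (hj : j ≤ m) {q : ℝ × ℝ} (hq : q ∈ levelVertices m j) :
    ![q.1, q.2 - 3 * j, level j] ∈ Km m := by
  apply subset_convexHull
  rcases hq with (rfl | rfl) | ⟨k, hk, rfl⟩
  · exact .inl <| .inl <| .inl <| .inl ⟨j, hj, by simp [wGrid_eq]⟩
  · exact .inl <| .inl <| .inl <| .inr ⟨j, hj, by simp [wGrid_eq]⟩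
  · exact .inl <| .inl <| .inr ⟨j, hj, k, hk, (vGrid_eq m j k).symm⟩

lemma neg_two_sub_mem_Icc (hx : x ∈ Icc (-2) 0) : -2 - x ∈ Icc (-2) 0 :=
  ⟨by linarith [hx.2], by linarith [hx.1]⟩

lemma convex_halfSpace (f : ℝ →ᵃ[ℝ] ℝ) (β γ b : ℝ) :
    Convex ℝ {p : Fin 3 → ℝ | β * p 1 + γ * p 2 ≤ f (p 0) + b} := by
  intro p (hp : β * p 1 + γ * p 2 ≤ _) q (hq : β * q 1 + γ * q 2 ≤ _) s t hs ht hst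
  have hf : f (s * p 0 + t * q 0) = s * f (p 0) + t * f (q 0) := Convex.combo_affine_apply hst
  change β * (s * p 1 + t * q 1) + γ * (s * p 2 + t * q 2) ≤ f (s * p 0 + t * q 0) + b
  rw [hf]
  calc β * (s * p 1 + t * q 1) + γ * (s * p 2 + t * q 2)
      = s * (β * p 1 + γ * p 2) + t * (β * q 1 + γ * q 2) := by ring
    _ ≤ s * (f (p 0) + b) + t * (f (q 0) + b) := by gcongr
    _ = s * f (p 0) + t * f (q 0) + b := by linear_combination b * hst

lemma affine_le_of_mem {f : ℝ →ᵃ[ℝ] ℝ} {β γ b : ℝ}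
    (levels : ∀ j ≤ m, ∀ q ∈ levelVertices m j, β * (q.2 - 3 * j) + γ * level j ≤ f q.1 + b)
    (base : ∀ k ≤ m + 2, ∀ z ∈ Icc 0 (level m),
      β * (-(3 * m) - 3 - arcY m k) + γ * z ≤ f (-2 - arcX m k) + b)
    (hp : p ∈ Km m) : β * p 1 + γ * p 2 ≤ f (p 0) + b := by
  refine convexHull_min ?_ (convex_halfSpace f β γ b) hp
  rintro _ ((((⟨j, hj, rfl⟩ | ⟨j, hj, rfl⟩) | ⟨j, hj, k, hk, rfl⟩) | ⟨k, hk, rfl⟩) | ⟨k, hk, rfl⟩)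
  · simpa [wGrid_eq] using levels j hj (0, 0) (.inl (.inl rfl))
  · simpa [wGrid_eq] using levels j hj (-2, 0) (.inl (.inr rfl))
  · simpa [vGrid_eq] using levels j hj _ (.inr ⟨k, hk, rfl⟩)
  · simpa [uZero_sub_wK] using base k hk 0 (left_mem_Icc.2 (level_nonneg m))
  · simpa [uOne_sub_wK] using base k hk _ (right_mem_Icc.2 (level_nonneg m))

lemma apply_two_mem_Icc (hp : p ∈ Km m) : p 2 ∈ Icc 0 (level m) := by
  constructor
  · have := affine_le_of_mem (f := 0) (β := 0) (γ := -1) (b := 0)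
      (fun j _ _ _ => by simpa using level_nonneg j) (fun _ _ z hz => by simpa using hz.1) hp
    simpa using this
  · have := affine_le_of_mem (f := 0) (β := 0) (γ := 1) (b := level m)
      (fun j hj _ _ => by simpa using monotone_level hj) (fun _ _ z hz => by simpa using hz.2) hp
    simpa using this

lemma apply_one_le_arcLine (hk : k ≤ m + 1) (hp : p ∈ Km m) :
    p 1 ≤ arcLine m k (p 0) - 3 * p 2 := by
  have := affine_le_of_mem (f := arcLine m k) (β := 1) (γ := 3) (b := 0)
    (fun j hj q hq => by
      linarith [snd_le_arcLine_of_mem_levelVertices (by lia) hk hq, level_le_self j])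
    (fun l hl z hz => by
      linarith [arcLine_nonneg hk (neg_two_sub_mem_Icc (arcX_mem_Icc m l)), (arcY_mem_Icc hl).1,
        hz.2, level_le_self m]) hp
  linarith

lemma le_apply_one (hk : k ≤ m + 1) (hp : p ∈ Km m) :
    -(3 * m) - 3 - arcLine m k (-2 - p 0) ≤ p 1 := by
  have hf x : (arcLine m k).comp (AffineMap.const ℝ ℝ (-2) - AffineMap.id ℝ ℝ) x =
    arcLine m k (-2 - x) := rfl
  have := affine_le_of_mem
    (f := (arcLine m k).comp (AffineMap.const ℝ ℝ (-2) - AffineMap.id ℝ ℝ))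
    (β := -1) (γ := 0) (b := 3 * m + 3)
    (fun j hj q hq => by
      have hjm : (j : ℝ) ≤ m := by exact_mod_cast hj
      have := fst_mem_Icc_of_mem_levelVertices (by lia) hq
      rw [hf]
      linarith [arcLine_nonneg hk (neg_two_sub_mem_Icc this),
        (snd_mem_Icc_of_mem_levelVertices (by lia) hq).1])
    (fun l hl z _ => by
      rw [hf, sub_sub_cancel]
      linarith [arcY_le_arcLine hk hl]) hp
  rw [hf] at this
  linarith

-- The slope `4 * 2 ^ j` is forced: consecutive levels are `3` apart horizontally while ordinates
-- vary by up to `1`, and equality holds for `l = j + 1` as well as for `l + 1 = j`.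
lemma slope_mul_level_sub_le (h : l ≠ j) :
    4 * 2 ^ j * (level l - level j) ≤ 3 * (l - j : ℝ) - 1 := by
  rcases h.lt_or_gt with h | h
  · obtain ⟨n, rfl⟩ := Nat.exists_eq_add_of_lt h
    have scaled : 2 ^ (l + n + 1) * (level l - level (l + n + 1)) = 1 - 2 ^ (n + 1) := by
      simp only [level, pow_succ, pow_add, one_div, inv_pow]
      field_simp
      ring
    have bernoulli : 1 + (n + 1) ≤ (2 : ℝ) ^ (n + 1) := by
      simpa [one_add_one_eq_two] using
        one_add_mul_le_pow (show (-2 : ℝ) ≤ 1 by norm_num) (n + 1)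
    rw [mul_assoc, scaled]
    push_cast
    linarith
  · obtain ⟨n, rfl⟩ := Nat.exists_eq_add_of_lt h
    have scaled : 2 ^ j * (level (j + n + 1) - level j) = 1 - (1 / 2) ^ (n + 1) := by
      simp only [level, pow_succ, pow_add, one_div, inv_pow]
      field_simp
      ring
    have bernoulli : 1 + (n + 1) * (-1 / 2) ≤ (1 / 2 : ℝ) ^ (n + 1) := by
      rw [show (1 / 2 : ℝ) = 1 + -1 / 2 by norm_num]
      exact_mod_cast one_add_mul_le_pow (show (-2 : ℝ) ≤ -1 / 2 by norm_num) (n + 1)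
    rw [mul_assoc, scaled]
    push_cast
    linarith

lemma apply_one_le_of_above {h : ℝ →ᵃ[ℝ] ℝ} (hj : j ≤ m)
    (above : ∀ q ∈ levelVertices m j, q.2 ≤ h q.1) (hp : p ∈ Km m) (hpz : p 2 = level j) :
    p 1 ≤ h (p 0) - 3 * j := by
  have h_nonneg {x} (hx : x ∈ Icc (-2) 0) : 0 ≤ h x :=
    affineMap_le_of_mem_Icc (f := AffineMap.const ℝ ℝ 0) (above (-2, 0) (.inl (.inr rfl)))
      (above (0, 0) (.inl (.inl rfl))) hx
  have := affine_le_of_mem (f := h) (β := 1) (γ := 4 * 2 ^ j) (b := 4 * 2 ^ j * level j - 3 * j)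
    (fun l hl q hq => by
      rcases eq_or_ne l j with rfl | hlj
      · linarith [above q hq]
      · linarith [h_nonneg (fst_mem_Icc_of_mem_levelVertices (by lia) hq),
          (snd_mem_Icc_of_mem_levelVertices (by lia) hq).2, slope_mul_level_sub_le hlj])
    (fun k hk z hz => by
      have : 4 * 2 ^ j * (z - level j) ≤ 3 * (m - j : ℝ) := by
        rcases eq_or_ne m j with rfl | hmj
        · nlinarith [hz.2, pow_pos (show (0 : ℝ) < 2 by norm_num) m]
        · nlinarith [hz.2, pow_pos (show (0 : ℝ) < 2 by norm_num) j, slope_mul_level_sub_le hmj]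
      linarith [h_nonneg (neg_two_sub_mem_Icc (arcX_mem_Icc m k)), (arcY_mem_Icc hk).1]) hp
  rw [hpz] at this
  linarith

lemma arcLine_notMem (hl : 1 ≤ l) (hlm : l ≤ m) (hk : 1 ≤ k) (hkm : k ≤ m)
    (hx : x ≠ cutX m l k) : ![x, arcLine m k x - 3 * l, level l] ∉ Km m := by
  intro hp
  rcases hx.lt_or_gt with hx | hx
  · obtain ⟨h, above, -, h_lt⟩ := exists_affineMap_above_levelVertices hl hlm hkm
    exact (apply_one_le_of_above hlm above hp rfl).not_gt (sub_lt_sub_right (h_lt x hx) _)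
  · obtain ⟨k, rfl⟩ := Nat.exists_eq_add_of_le' hk
    obtain ⟨h, above, h_lt, -⟩ := exists_affineMap_above_levelVertices hl hlm (Nat.le_of_lt hkm)
    exact (apply_one_le_of_above hlm above hp rfl).not_gt (sub_lt_sub_right (h_lt x hx) _)

end Polytope

section Membership

variable {m j k : ℕ} {x y y' z : ℝ}

lemma level_edge_mem (hj : j ≤ m) (hx : x ∈ Icc (-2) 0) : ![x, -(3 * j), level j] ∈ Km m := by
  have left : ![(-2 : ℝ), -(3 * j), level j] ∈ Km m := by
    simpa using level_vertex_mem hj (q := (-2, 0)) (.inl (.inr rfl))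
  have right : ![(0 : ℝ), -(3 * j), level j] ∈ Km m := by
    simpa using level_vertex_mem hj (q := (0, 0)) (.inl (.inl rfl))
  exact vec3_mem_of_mem_Icc (convex_Km m) (AffineMap.id ℝ ℝ) (AffineMap.const ℝ ℝ _)
    (AffineMap.const ℝ ℝ _) left right hx

lemma base_vertex_mem (hk : k ≤ m + 2) (hz : z ∈ Icc 0 (level m)) :
    ![-2 - arcX m k, -(3 * m) - 3 - arcY m k, z] ∈ Km m := by
  have bottom : ![-2 - arcX m k, -(3 * m) - 3 - arcY m k, 0] ∈ Km m :=
    subset_convexHull ℝ _ <| .inl <| .inr ⟨k, hk, (uZero_sub_wK m k).symm⟩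
  have top : ![-2 - arcX m k, -(3 * m) - 3 - arcY m k, level m] ∈ Km m :=
    subset_convexHull ℝ _ <| .inr ⟨k, hk, (uOne_sub_wK m k).symm⟩
  exact vec3_mem_of_mem_Icc (convex_Km m) (AffineMap.const ℝ ℝ _) (AffineMap.const ℝ ℝ _)
    (AffineMap.id ℝ ℝ) bottom top hz

lemma mem_of_le (hp : ![x, y, z] ∈ Km m) (hx : x ∈ Icc (-2) 0) (hy' : -(3 * m) - 3 ≤ y')
    (hyy' : y' ≤ y) : ![x, y', z] ∈ Km m := by
  have hz : z ∈ Icc 0 (level m) := apply_two_mem_Icc hp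
  have right : ![(0 : ℝ), -(3 * m) - 3, z] ∈ Km m := by simpa using base_vertex_mem le_rfl hz
  have left : ![(-2 : ℝ), -(3 * m) - 3, z] ∈ Km m := by
    simpa using base_vertex_mem (m + 2).zero_le hz
  have base : ![x, -(3 * m) - 3, z] ∈ Km m :=
    vec3_mem_of_mem_Icc (convex_Km m) (AffineMap.id ℝ ℝ) (AffineMap.const ℝ ℝ _)
      (AffineMap.const ℝ ℝ _) left right hx
  exact vec3_mem_of_mem_Icc (convex_Km m) (AffineMap.const ℝ ℝ _) (AffineMap.id ℝ ℝ)
    (AffineMap.const ℝ ℝ _) base hp ⟨hy', hyy'⟩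

lemma arc_vertex_mem (hk : k ≤ m + 1) : ![arcX m k, arcY m k, 0] ∈ Km m := by
  simpa [cutX, cutY] using level_vertex_mem m.zero_le (.inr ⟨k, hk, rfl⟩)

lemma arcLine_mem (hk : k ≤ m) (hx : x ∈ Icc (arcX m (k + 1)) (arcX m k)) :
    ![x, arcLine m k x, 0] ∈ Km m := by
  refine vec3_mem_of_mem_Icc (convex_Km m) (AffineMap.id ℝ ℝ) (arcLine m k)
    (AffineMap.const ℝ ℝ 0) ?_ ?_ hx
  · simpa [arcLine_right (show k ≤ m + 1 by lia)] using arc_vertex_mem (Nat.succ_le_succ hk)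
  · simpa [arcLine_left (show k ≤ m + 1 by lia)] using arc_vertex_mem (Nat.le_succ_of_le hk)

lemma mem_of_le_arcLine (hk : k ≤ m) (hx : x ∈ Icc (arcX m (k + 1)) (arcX m k))
    (hy : -(3 * m) - 3 ≤ y) (hyL : y ≤ arcLine m k x) : ![x, y, 0] ∈ Km m :=
  mem_of_le (arcLine_mem hk hx) (Icc_arcX_subset m k hx) hy hyL

lemma reflected_arcLine_mem (hk : k ≤ m + 1) (hx : x ∈ Icc (arcX m (k + 1)) (arcX m k))
    (hz : z ∈ Icc 0 (level m)) :
    ![-2 - (arcX m k + arcX m (k + 1) - x),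
      -(3 * m) - 3 - (arcY m k + arcY m (k + 1) - arcLine m k x), z] ∈ Km m := by
  have left : ![-2 - (arcX m k + arcX m (k + 1) - arcX m (k + 1)),
      -(3 * m) - 3 - (arcY m k + arcY m (k + 1) - arcLine m k (arcX m (k + 1))), z] ∈ Km m := by
    rw [arcLine_right hk, add_sub_cancel_right, add_sub_cancel_right]
    exact base_vertex_mem (by lia) hz
  have right : ![-2 - (arcX m k + arcX m (k + 1) - arcX m k),
      -(3 * m) - 3 - (arcY m k + arcY m (k + 1) - arcLine m k (arcX m k)), z] ∈ Km m := by
    rw [arcLine_left hk, add_sub_cancel_left, add_sub_cancel_left]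
    exact base_vertex_mem (by lia) hz
  exact vec3_mem_of_mem_Icc (convex_Km m)
    (AffineMap.const ℝ ℝ (-2) - (AffineMap.const ℝ ℝ (arcX m k + arcX m (k + 1)) -
      AffineMap.id ℝ ℝ))
    (AffineMap.const ℝ ℝ (-(3 * m) - 3 : ℝ) - (AffineMap.const ℝ ℝ (arcY m k + arcY m (k + 1)) -
      arcLine m k))
    (AffineMap.const ℝ ℝ z) left right hx

lemma column_bottom_mem (hj : j + 1 ≤ m) (hx : x ∈ Icc (-2) 0) (hy : y ∈ Icc (-3) 3) :
    ![x, y - 3 * (j + 1 : ℕ), level j] ∈ Km m := by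
  have hjm : ((j + 1 : ℕ) : ℝ) ≤ m := by exact_mod_cast hj
  exact mem_of_le (level_edge_mem (by lia) hx) hx (by linarith [hy.1])
    (by push_cast; linarith [hy.2])

lemma column_mem (hj : j + 1 ≤ m) (hx : x ∈ Icc (-2) 0)
    (top : ![x, y - 3 * (j + 1 : ℕ), level (j + 1)] ∈ Km m) (hy' : y' ∈ Icc (-3) 3)
    (hyy' : y' ≤ y) (hz : z ∈ Icc (-(1 / 2) ^ (j + 1)) 0) :
    ![x, y' - 3 * (j + 1 : ℕ), z + level (j + 1)] ∈ Km m := by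
  have hjm : ((j + 1 : ℕ) : ℝ) ≤ m := by exact_mod_cast hj
  have top' : ![x, y' - 3 * (j + 1 : ℕ), level (j + 1)] ∈ Km m :=
    mem_of_le top hx (by linarith [hy'.1]) (by linarith)
  have height : z + level (j + 1) ∈ Icc (level j) (level (j + 1)) := by
    constructor <;> linarith [hz.1, hz.2, level_succ j]
  exact vec3_mem_of_mem_Icc (convex_Km m) (AffineMap.const ℝ ℝ _) (AffineMap.const ℝ ℝ _)
    (AffineMap.id ℝ ℝ) (column_bottom_mem hj hx hy') top' height

lemma arcLine_sub_one_mem (hm : 1 ≤ m) (hk : k ≤ m)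
    (hx : x ∈ Icc (arcX m (k + 1)) (arcX m k)) (hz : z ∈ Icc 0 (1 / 8)) :
    ![x, arcLine m k x - 1, z] ∈ Km m := by
  have hx' := Icc_arcX_subset m k hx
  have hmR : (1 : ℝ) ≤ m := by exact_mod_cast hm
  -- `(x, L - 1, z)` lies below the segment from the chord to the edge at level `1`.
  set L := arcLine m k x
  have hL : L ≤ 1 := arcLine_le_one (by lia) hx
  have lower : ![x, L, 0] ∈ Km m := arcLine_mem hk hx
  have hz' : z ∈ Icc 0 (1 / 2) := ⟨hz.1, by linarith [hz.2]⟩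
  have upper : ![x, L - 2 * (L + 3) * (1 / 2), 1 / 2] ∈ Km m := by
    convert level_edge_mem hm hx' using 3
    · ring
    · norm_num [level]
  have tilted : ![x, L - 2 * (L + 3) * z, z] ∈ Km m :=
    vec3_mem_of_mem_Icc (convex_Km m) (AffineMap.const ℝ ℝ x)
      (AffineMap.const ℝ ℝ L - (2 * (L + 3)) • AffineMap.id ℝ ℝ) (AffineMap.id ℝ ℝ)
      (by simpa using lower) upper hz'
  exact mem_of_le tilted hx' (by linarith [arcLine_nonneg (show k ≤ m + 1 by lia) hx'])
    (by nlinarith [hz.2, arcLine_nonneg (show k ≤ m + 1 by lia) hx'])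

end Membership

section Translates

variable {m i j k : ℕ} {ε : ℝ} {p : Fin 3 → ℝ}

/-- The translate `A_i`. -/
def translateA (m : ℕ) (ε : ℝ) (i : ℕ) : Set (Fin 3 → ℝ) := ![0, 0, -(i / m) * ε] +ᵥ Km m

/-- The translate `B_j`. -/
def translateB (m j : ℕ) : Set (Fin 3 → ℝ) := -wJ j +ᵥ Km m

/-- The translate `C_k`. -/
def translateC (m k : ℕ) : Set (Fin 3 → ℝ) := (wK m k + wK m (k + 1) - uOne m) +ᵥ Km m

/-- The complement of the union of all translates. -/
def exterior (m : ℕ) (ε : ℝ) : Set (Fin 3 → ℝ) :=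
  ((⋃ i ∈ Finset.Icc 1 m, translateA m ε i) ∪ (⋃ j ∈ Finset.Icc 1 m, translateB m j) ∪
    ⋃ k ∈ Finset.Icc 1 m, translateC m k)ᶜ

lemma mem_translateA : p ∈ translateA m ε i ↔ ![p 0, p 1, p 2 + i / m * ε] ∈ Km m := by
  rw [translateA, mem_vadd_set_iff_neg_vadd_mem]
  convert Iff.rfl using 2
  ext l; fin_cases l <;> simp; ring

lemma mem_translateB : p ∈ translateB m j ↔ ![p 0, p 1 - 3 * j, p 2 + level j] ∈ Km m := by
  rw [translateB, mem_vadd_set_iff_neg_vadd_mem]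
  convert Iff.rfl using 2
  ext l; fin_cases l <;> simp [wJ, level] <;> ring

lemma mem_translateC : p ∈ translateC m k ↔
    ![-2 - (arcX m k + arcX m (k + 1) - p 0),
      -(3 * m) - 3 - (arcY m k + arcY m (k + 1) - p 1), p 2 + level m] ∈ Km m := by
  rw [translateC, mem_vadd_set_iff_neg_vadd_mem]
  convert Iff.rfl using 2
  ext l; fin_cases l <;> simp [wK_eq, uOne, level] <;> ring

lemma mem_exterior : p ∈ exterior m ε ↔ (∀ i ∈ Finset.Icc 1 m, p ∉ translateA m ε i) ∧
    (∀ j ∈ Finset.Icc 1 m, p ∉ translateB m j) ∧ ∀ k ∈ Finset.Icc 1 m, p ∉ translateC m k := by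
  simp only [exterior, mem_compl_iff, mem_union, mem_iUnion, not_or, not_exists, and_assoc]

lemma isClosed_translateB (m j : ℕ) : IsClosed (translateB m j) := (isClosed_Km m).vadd _

lemma arcLine_le_of_mem_translateC (hk : k ≤ m + 1) (hp : p ∈ translateC m k) :
    arcLine m k (p 0) ≤ p 1 := by
  have reflected : -(3 * m) - 3 - arcLine m k (-2 - (-2 - (arcX m k + arcX m (k + 1) - p 0))) ≤
      -(3 * m) - 3 - (arcY m k + arcY m (k + 1) - p 1) := le_apply_one hk (mem_translateC.1 hp)
  rw [sub_sub_cancel, affineMap_apply_eq_add_mul _ _ (arcX m k), arcLine_left hk] at reflected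
  have endpoint := affineMap_apply_eq_add_mul (arcLine m k) (arcX m (k + 1)) (p 0)
  rw [arcLine_right hk] at endpoint
  linarith

end Translates

section Cell

variable {m i j k : ℕ} {ε : ℝ} {p : Fin 3 → ℝ}

/-- The depth at which a hole below `A_i` and between `B_j` and `B_{j+1}` is closed off: by
`A_{i+1}`, or by `B_{j+1}` when `i = m`. -/
noncomputable def cellDepth (m : ℕ) (ε : ℝ) (i j : ℕ) : ℝ :=
  if i = m then (1 / 2) ^ (j + 1) else (i + 1 : ℕ) / m * ε

/-- The open prism containing the hole below `A_i`, between `B_j` and `B_{j+1}`, and inside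
`C_k`. -/
def cell (m : ℕ) (ε : ℝ) (i j k : ℕ) : Set (Fin 3 → ℝ) :=
  {p | p 0 ∈ Ioo (cutX m (j + 1) k) (cutX m j k) ∧ p 1 - arcLine m k (p 0) ∈ Ioo (-1) 0 ∧
    p 2 ∈ Ioo (-cellDepth m ε i j) (-(i / m * ε))}

/-- The closed prism with the same faces as `cell`. -/
def closedCell (m : ℕ) (ε : ℝ) (i j k : ℕ) : Set (Fin 3 → ℝ) :=
  {p | p 0 ∈ Icc (cutX m (j + 1) k) (cutX m j k) ∧ p 1 - arcLine m k (p 0) ∈ Icc (-1) 0 ∧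
    p 2 ∈ Icc (-cellDepth m ε i j) (-(i / m * ε))}

lemma continuous_sub_arcLine (m k : ℕ) :
    Continuous fun p : Fin 3 → ℝ => p 1 - arcLine m k (p 0) := by
  have := (arcLine m k).continuous_of_finiteDimensional
  fun_prop

lemma isOpen_cell (m : ℕ) (ε : ℝ) (i j k : ℕ) : IsOpen (cell m ε i j k) :=
  (isOpen_Ioo.preimage (continuous_apply 0)).inter <|
    (isOpen_Ioo.preimage (continuous_sub_arcLine m k)).inter <|
      isOpen_Ioo.preimage (continuous_apply 2)

lemma isClosed_closedCell (m : ℕ) (ε : ℝ) (i j k : ℕ) : IsClosed (closedCell m ε i j k) :=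
  (isClosed_Icc.preimage (continuous_apply 0)).inter <|
    (isClosed_Icc.preimage (continuous_sub_arcLine m k)).inter <|
      isClosed_Icc.preimage (continuous_apply 2)

lemma closure_cell_subset (m : ℕ) (ε : ℝ) (i j k : ℕ) :
    closure (cell m ε i j k) ⊆ closedCell m ε i j k :=
  closure_minimal (fun _ hp => ⟨Ioo_subset_Icc_self hp.1, Ioo_subset_Icc_self hp.2.1,
    Ioo_subset_Icc_self hp.2.2⟩) (isClosed_closedCell m ε i j k)

lemma apply_zero_mem_Icc_of_mem_closedCell (hj : j ≤ m) (hk : k ≤ m + 1)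
    (hp : p ∈ closedCell m ε i j k) : p 0 ∈ Icc (arcX m (k + 1)) (arcX m k) :=
  Icc_subset_Icc (cutX_mem_Icc (by lia) hk).1 (cutX_mem_Icc (by lia) hk).2 hp.1

lemma apply_one_mem_Icc_of_mem_closedCell (hj : j ≤ m) (hk : k ≤ m + 1)
    (hp : p ∈ closedCell m ε i j k) : p 1 ∈ Icc (-1) 1 := by
  have hx := apply_zero_mem_Icc_of_mem_closedCell hj hk hp
  constructor
  · linarith [hp.2.1.1, arcLine_nonneg hk (Icc_arcX_subset m k hx)]
  · linarith [hp.2.1.2, arcLine_le_one hk hx]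

lemma cellDepth_le (hi : i ≤ m) (hj : j + 1 ≤ m) (hε : 0 < ε) (hεm : ε ≤ (1 / 2) ^ (m + 1)) :
    cellDepth m ε i j ≤ (1 / 2) ^ (j + 1) := by
  unfold cellDepth
  split_ifs with him
  · rfl
  · have ratio_le : ((i + 1 : ℕ) : ℝ) / m ≤ 1 :=
      div_le_one_of_le₀ (by norm_cast; lia) (by positivity)
    calc ((i + 1 : ℕ) : ℝ) / m * ε ≤ 1 * ε := by gcongr
      _ ≤ (1 / 2) ^ (m + 1) := by rwa [one_mul]
      _ ≤ (1 / 2) ^ (j + 1) := pow_le_pow_of_le_one (by norm_num) (by norm_num) (by lia)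

lemma apply_two_mem_Icc_of_mem_closedCell (hi : i ≤ m) (hj : j + 1 ≤ m) (hε : 0 < ε)
    (hεm : ε ≤ (1 / 2) ^ (m + 1)) (hp : p ∈ closedCell m ε i j k) :
    p 2 ∈ Icc (-(1 / 2) ^ (j + 1)) 0 := by
  have : 0 ≤ i / m * ε := by positivity
  constructor <;> linarith [hp.2.2.1, hp.2.2.2, cellDepth_le hi hj hε hεm]

lemma mem_translateA_of_apply_two_eq {n : ℕ} (hj : j ≤ m) (hk : k ≤ m)
    (hp : p ∈ closedCell m ε i j k) (h : p 2 = -(n / m * ε)) : p ∈ translateA m ε n := by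
  rw [mem_translateA, h, neg_add_cancel]
  exact mem_of_le_arcLine hk (apply_zero_mem_Icc_of_mem_closedCell hj (by lia) hp)
    (by linarith [(apply_one_mem_Icc_of_mem_closedCell hj (by lia) hp).1]) (by linarith [hp.2.1.2])

lemma mem_translateC_of_outer (hi : i ≤ m) (hj : j + 1 ≤ m) (hk : k ≤ m + 1) (hε : 0 < ε)
    (hεm : ε ≤ (1 / 2) ^ (m + 1)) (hp : p ∈ closedCell m ε i j k)
    (h : p 1 - arcLine m k (p 0) = 0) : p ∈ translateC m k := by
  rw [mem_translateC, sub_eq_zero.1 h]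
  have hz := apply_two_mem_Icc_of_mem_closedCell hi hj hε hεm hp
  have half_le {n : ℕ} (hn : 1 ≤ n) : (1 / 2 : ℝ) ^ n ≤ 1 / 2 :=
    pow_le_of_le_one (by norm_num) (by norm_num) (by lia)
  refine reflected_arcLine_mem hk (apply_zero_mem_Icc_of_mem_closedCell (by lia) hk hp)
    ⟨?_, by linarith [hz.2]⟩
  rw [level]
  linarith [hz.1, half_le (show 1 ≤ j + 1 by lia), half_le (show 1 ≤ m by lia)]

lemma mem_translateB_of_left (hi : i ≤ m) (hj : j + 1 ≤ m) (hk : k ≤ m + 1) (hε : 0 < ε)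
    (hεm : ε ≤ (1 / 2) ^ (m + 1)) (hp : p ∈ closedCell m ε i j k) (h : p 0 = cutX m (j + 1) k) :
    p ∈ translateB m (j + 1) := by
  have hx := apply_zero_mem_Icc_of_mem_closedCell (by lia) hk hp
  have hy := apply_one_mem_Icc_of_mem_closedCell (by lia) hk hp
  have top := level_vertex_mem hj (.inr ⟨k, hk, rfl⟩)
  rw [mem_translateB]
  refine column_mem hj (Icc_arcX_subset m k hx) (h ▸ top) ⟨by linarith [hy.1], by linarith [hy.2]⟩
    ?_ (apply_two_mem_Icc_of_mem_closedCell hi hj hε hεm hp)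
  rw [← arcLine_cutX hk, ← h]
  linarith [hp.2.1.2]

lemma mem_translateB_of_right (hi : i ≤ m) (hj : 1 ≤ j) (hjm : j + 1 ≤ m) (hk : k ≤ m + 1)
    (hε : 0 < ε) (hεm : ε ≤ (1 / 2) ^ (m + 1)) (hp : p ∈ closedCell m ε i j k)
    (h : p 0 = cutX m j k) : p ∈ translateB m j := by
  have hx := apply_zero_mem_Icc_of_mem_closedCell (by lia) hk hp
  have hy := apply_one_mem_Icc_of_mem_closedCell (by lia) hk hp
  have hz := apply_two_mem_Icc_of_mem_closedCell hi hjm hε hεm hp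
  have top := level_vertex_mem (show j ≤ m by lia) (.inr ⟨k, hk, rfl⟩)
  obtain ⟨j, rfl⟩ := Nat.exists_eq_add_of_le' hj
  have half_pow_le : (1 / 2 : ℝ) ^ (j + 1 + 1) ≤ (1 / 2) ^ (j + 1) :=
    pow_le_pow_of_le_one (by norm_num) (by norm_num) (by lia)
  rw [mem_translateB]
  refine column_mem (by lia) (Icc_arcX_subset m k hx) (h ▸ top)
    ⟨by linarith [hy.1], by linarith [hy.2]⟩ ?_ ⟨by linarith [hz.1], hz.2⟩
  rw [← arcLine_cutX hk, ← h]
  linarith [hp.2.1.2]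

lemma mem_translateA_of_inner (hi : i < m) (hj : 1 ≤ j) (hjm : j + 1 ≤ m) (hk : k ≤ m)
    (hε : 0 < ε) (hεm : ε ≤ (1 / 2) ^ (m + 1)) (hp : p ∈ closedCell m ε i j k)
    (h : p 1 - arcLine m k (p 0) = -1) : p ∈ translateA m ε (i + 1) := by
  have hz : p 2 ∈ Icc (-((i + 1 : ℕ) / m * ε)) (-(i / m * ε)) := by
    simpa only [cellDepth, if_neg hi.ne] using hp.2.2
  have step : ((i + 1 : ℕ) : ℝ) / m * ε = i / m * ε + ε / m := by push_cast; ring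
  have step_le : ε / m ≤ 1 / 8 := calc
    ε / m ≤ ε := div_le_self hε.le (by exact_mod_cast (by lia : 1 ≤ m))
    _ ≤ (1 / 2) ^ (m + 1) := hεm
    _ ≤ (1 / 2) ^ 3 := pow_le_pow_of_le_one (by norm_num) (by norm_num) (by lia)
    _ = 1 / 8 := by norm_num
  rw [mem_translateA, sub_eq_iff_eq_add.1 h, neg_add_eq_sub]
  exact arcLine_sub_one_mem (by lia) hk (apply_zero_mem_Icc_of_mem_closedCell (by lia) (by lia) hp)
    ⟨by linarith [hz.1], by linarith [hz.2]⟩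

lemma mem_translateB_of_inner (hi : i ≤ m) (hj : j + 1 ≤ m) (hk : k ≤ m + 1) (hε : 0 < ε)
    (hεm : ε ≤ (1 / 2) ^ (m + 1)) (hp : p ∈ closedCell m ε i j k)
    (h : p 1 - arcLine m k (p 0) = -1) : p ∈ translateB m (j + 1) := by
  have hx := apply_zero_mem_Icc_of_mem_closedCell (by lia) hk hp
  have hy := apply_one_mem_Icc_of_mem_closedCell (by lia) hk hp
  rw [mem_translateB]
  exact column_mem (y := 0) hj (Icc_arcX_subset m k hx)
    (by simpa using level_edge_mem hj (Icc_arcX_subset m k hx))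
    ⟨by linarith [hy.1], by linarith [hy.2]⟩ (by linarith [arcLine_le_one hk hx])
    (apply_two_mem_Icc_of_mem_closedCell hi hj hε hεm hp)

lemma mem_translateB_of_floor (hj : j + 1 ≤ m) (hk : k ≤ m + 1) (hp : p ∈ closedCell m ε i j k)
    (h : p 2 = -(1 / 2) ^ (j + 1)) : p ∈ translateB m (j + 1) := by
  have hx := apply_zero_mem_Icc_of_mem_closedCell (by lia) hk hp
  have hy := apply_one_mem_Icc_of_mem_closedCell (by lia) hk hp
  rw [mem_translateB, h, level_succ, neg_add_cancel_comm_assoc]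
  exact column_bottom_mem hj (Icc_arcX_subset m k hx) ⟨by linarith [hy.1], by linarith [hy.2]⟩

lemma disjoint_frontier_cell (hi : 1 ≤ i) (him : i ≤ m) (hj : 1 ≤ j) (hjm : j + 1 ≤ m)
    (hk : 1 ≤ k) (hkm : k ≤ m) (hε : 0 < ε) (hεm : ε ≤ (1 / 2) ^ (m + 1)) :
    Disjoint (frontier (cell m ε i j k)) (exterior m ε) := by
  refine Set.disjoint_left.2 fun p hp hout => ?_
  obtain ⟨notA, notB, notC⟩ := mem_exterior.1 hout
  have notA := fun n h₁ h₂ => notA n (Finset.mem_Icc.2 ⟨h₁, h₂⟩)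
  have notB := fun n h₁ h₂ => notB n (Finset.mem_Icc.2 ⟨h₁, h₂⟩)
  rw [(isOpen_cell m ε i j k).frontier_eq] at hp
  have hpc := closure_cell_subset m ε i j k hp.1
  refine hp.2 ⟨?_, ?_, ?_⟩
  · rcases eq_endpoints_or_mem_Ioo_of_mem_Icc hpc.1 with left | right | hx
    · exact (notB _ (by lia) hjm (mem_translateB_of_left him hjm (by lia) hε hεm hpc left)).elim
    · exact (notB _ hj (by lia)
        (mem_translateB_of_right him hj hjm (by lia) hε hεm hpc right)).elim
    · exact hx
  · rcases eq_endpoints_or_mem_Ioo_of_mem_Icc hpc.2.1 with inner | outer | hy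
    · rcases him.lt_or_eq with lt | rfl
      · exact (notA _ (by lia) lt (mem_translateA_of_inner lt hj hjm hkm hε hεm hpc inner)).elim
      · exact (notB _ (by lia) hjm
          (mem_translateB_of_inner le_rfl hjm (by lia) hε hεm hpc inner)).elim
    · exact (notC k (Finset.mem_Icc.2 ⟨hk, hkm⟩)
        (mem_translateC_of_outer him hjm (by lia) hε hεm hpc outer)).elim
    · exact hy
  · rcases eq_endpoints_or_mem_Ioo_of_mem_Icc hpc.2.2 with floor | top | hz
    · rcases him.lt_or_eq with lt | rfl
      · rw [cellDepth, if_neg lt.ne] at floor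
        exact (notA _ (by lia) lt (mem_translateA_of_apply_two_eq (by lia) hkm hpc floor)).elim
      · rw [cellDepth, if_pos rfl] at floor
        exact (notB _ (by lia) hjm (mem_translateB_of_floor hjm (by lia) hpc floor)).elim
    · exact (notA _ hi him (mem_translateA_of_apply_two_eq (by lia) hkm hpc top)).elim
    · exact hz

end Cell

section Witness

variable {m i j k l i' j' k' : ℕ} {ε : ℝ} {p : Fin 3 → ℝ}

/-- The midpoint of the interval over which the cells with indices `j` and `k` lie. -/
noncomputable def midX (m j k : ℕ) : ℝ := midpoint ℝ (cutX m (j + 1) k) (cutX m j k)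

lemma midX_mem_Ioo (hk : k ≤ m + 1) : midX m j k ∈ Ioo (cutX m (j + 1) k) (cutX m j k) := by
  rw [← openSegment_eq_Ioo (cutX_lt_cutX hk j.lt_succ_self)]
  exact midpoint_mem_openSegment _ _

lemma midX_mem_Icc (hj : j ≤ m) (hk : k ≤ m + 1) :
    midX m j k ∈ Icc (arcX m (k + 1)) (arcX m k) :=
  ⟨(cutX_mem_Icc (by lia) hk).1.trans (midX_mem_Ioo hk).1.le,
    (midX_mem_Ioo hk).2.le.trans (cutX_mem_Icc (by lia) hk).2⟩

lemma midX_ne_cutX (hk : k ≤ m + 1) : midX m j k ≠ cutX m l k := by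
  intro h
  have hx := midX_mem_Ioo (j := j) hk
  rw [h] at hx
  have anti : StrictAnti fun n => cutX m n k := fun _ _ => cutX_lt_cutX hk
  have lt := anti.lt_iff_gt.1 hx.1
  have gt := anti.lt_iff_gt.1 hx.2
  lia

/-- A point of `cell m ε i j k` that no translate contains once `ε` is small. -/
noncomputable def witness (m : ℕ) (ε : ℝ) (i j k : ℕ) : Fin 3 → ℝ :=
  ![midX m j k, arcLine m k (midX m j k) - ε / m, -((i + 1 / 2) / m * ε)]

lemma witness_mem_cell (hi : i ≤ m) (hj : j + 1 ≤ m) (hk : k ≤ m + 1) (hε : 0 < ε)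
    (hεm : ε ≤ (1 / 2) ^ (m + 1)) : witness m ε i j k ∈ cell m ε i j k := by
  have hm : (1 : ℝ) ≤ m := by exact_mod_cast (by lia : 1 ≤ m)
  have hεj : 2 * ε ≤ (1 / 2) ^ (j + 1) := calc
    2 * ε ≤ 2 * (1 / 2) ^ (m + 1) := by gcongr
    _ = (1 / 2) ^ m := by rw [pow_succ]; ring
    _ ≤ (1 / 2) ^ (j + 1) := pow_le_pow_of_le_one (by norm_num) (by norm_num) hj
  have hj_lt : (1 / 2 : ℝ) ^ (j + 1) ≤ 1 := pow_le_one₀ (by norm_num) (by norm_num)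
  have step_pos : 0 < ε / m := by positivity
  have step_le : ε / m ≤ ε := div_le_self hε.le hm
  have depth : ((i : ℝ) + 1 / 2) / m * ε = i / m * ε + ε / m / 2 := by ring
  refine ⟨midX_mem_Ioo hk, ?_, ?_⟩
  · change arcLine m k (midX m j k) - ε / m - arcLine m k (midX m j k) ∈ Ioo (-1) 0
    constructor <;> linarith
  · change -((i + 1 / 2) / m * ε) ∈ Ioo (-cellDepth m ε i j) (-(i / m * ε))
    rw [depth]
    refine ⟨neg_lt_neg ?_, by linarith⟩
    unfold cellDepth
    split_ifs with him
    · subst him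
      rw [div_self (by positivity)]
      linarith
    · have : ((i + 1 : ℕ) : ℝ) / m * ε = i / m * ε + ε / m := by push_cast; ring
      linarith

lemma eq_of_midX_mem_Ioo (hj : j + 1 ≤ m) (hj' : j' + 1 ≤ m) (hk : k ≤ m) (hk' : k' ≤ m)
    (h : midX m j k ∈ Ioo (cutX m (j' + 1) k') (cutX m j' k')) : j = j' ∧ k = k' := by
  have chord_mem {a b} (ha : a + 1 ≤ m) (hb : b ≤ m) (hx : midX m j k ∈ Ioo (cutX m (a + 1) b)
      (cutX m a b)) : midX m j k ∈ Ioo (arcX m (b + 1)) (arcX m b) :=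
    Ioo_subset_Ioo (cutX_mem_Icc (by lia) (by lia)).1 (cutX_mem_Icc (by lia) (by lia)).2 hx
  have own := midX_mem_Ioo (m := m) (j := j) (show k ≤ m + 1 by lia)
  obtain rfl : k = k' := eq_of_mem_Ioo_of_antitoneOn (strictAntiOn_arcX m).antitoneOn (by lia)
    (by lia) (chord_mem hj hk own) (chord_mem hj' hk' h)
  have anti : StrictAnti fun n => cutX m n k := fun _ _ => cutX_lt_cutX (by lia)
  exact ⟨eq_of_mem_Ioo_of_antitoneOn (anti.antitone.antitoneOn (Iic m)) hj hj' own h, rfl⟩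

lemma eq_of_witness_mem_cell (hi : i ≤ m) (hj : j + 1 ≤ m) (hj' : j' + 1 ≤ m) (hk : k ≤ m)
    (hk' : k' ≤ m) (hε : 0 < ε) (h : witness m ε i j k ∈ cell m ε i' j' k') :
    (i, j, k) = (i', j', k') := by
  obtain ⟨hx, -, floor_lt, lt_top⟩ := h
  obtain ⟨rfl, rfl⟩ := eq_of_midX_mem_Ioo hj hj' hk hk' hx
  change -cellDepth m ε i' j < -((i + 1 / 2) / m * ε) at floor_lt
  change -((i + 1 / 2) / m * ε) < -(i' / m * ε) at lt_top
  have hm : (0 : ℝ) < m := by exact_mod_cast (by lia : 0 < m)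
  have lt_iff (a b : ℝ) : -(b / m * ε) < -(a / m * ε) ↔ a < b := by
    rw [neg_lt_neg_iff, mul_lt_mul_iff_left₀ hε, div_lt_div_iff_of_pos_right hm]
  have ge : i' ≤ i := by
    have : (i' : ℝ) < (i + 1 : ℕ) := by push_cast; linarith [(lt_iff _ _).1 lt_top]
    exact Nat.lt_succ_iff.1 (by exact_mod_cast this)
  have le : i ≤ i' := by
    by_contra! lt
    rw [cellDepth, if_neg (by lia), lt_iff] at floor_lt
    have : ((i' + 1 : ℕ) : ℝ) ≤ i := by exact_mod_cast lt
    linarith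
  rw [le.antisymm ge]

lemma witness_notMem_translateA (hk : k ≤ m + 1) (hm : 1 ≤ m) (hε : 0 < ε) :
    witness m ε i j k ∉ translateA m ε i' := by
  have step_pos : 0 < ε / m := div_pos hε (by exact_mod_cast hm)
  rw [mem_translateA]
  intro h
  have height_nonneg : 0 ≤ -((i + 1 / 2) / m * ε) + i' / m * ε := (apply_two_mem_Icc h).1
  have below : arcLine m k (midX m j k) - ε / m ≤
      arcLine m k (midX m j k) - 3 * (-((i + 1 / 2) / m * ε) + i' / m * ε) :=
    apply_one_le_arcLine hk h
  have height_eq : -((i + 1 / 2) / m * ε) + i' / m * ε = (i' - i - 1 / 2) * (ε / m) := by ring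
  rw [height_eq] at below height_nonneg
  have ge : (1 / 2 : ℝ) ≤ i' - i := by linarith [nonneg_of_mul_nonneg_left height_nonneg step_pos]
  have : (i' : ℝ) - i - 1 / 2 ≤ 1 / 3 := by
    by_contra! gt
    nlinarith
  have lt : i < i' := by exact_mod_cast (by linarith : (i : ℝ) < i')
  have : ((i + 1 : ℕ) : ℝ) ≤ i' := by exact_mod_cast lt
  push_cast at this
  linarith

lemma witness_notMem_translateC (hj : j ≤ m) (hk : k ≤ m + 1) (hk' : k' ≤ m + 1) (hm : 1 ≤ m)
    (hε : 0 < ε) : witness m ε i j k ∉ translateC m k' := by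
  intro h
  have outside : arcLine m k' (midX m j k) ≤ arcLine m k (midX m j k) - ε / m :=
    arcLine_le_of_mem_translateC hk' h
  have step_pos : 0 < ε / m := div_pos hε (by exact_mod_cast hm)
  linarith [arcLine_le_arcLine hk hk' (midX_mem_Icc hj hk)]

lemma eventually_witness_notMem_translateB (hl : 1 ≤ l) (hlm : l ≤ m) (hk : 1 ≤ k)
    (hkm : k ≤ m) : ∀ᶠ ε in 𝓝[>] 0, witness m ε i j k ∉ translateB m l := by
  have continuous_witness : Continuous fun ε => witness m ε i j k := by
    unfold witness
    fun_prop
  have limit_notMem : witness m 0 i j k ∉ translateB m l := by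
    simpa [mem_translateB, witness] using
      arcLine_notMem hl hlm hk hkm (midX_ne_cutX (j := j) (l := l) (show k ≤ m + 1 by lia))
  exact (continuous_witness.continuousAt.eventually
    ((isClosed_translateB m l).isOpen_compl.mem_nhds limit_notMem)).filter_mono nhdsWithin_le_nhds

lemma eventually_witness_mem_exterior (hj : j + 1 ≤ m) (hk : 1 ≤ k) (hkm : k ≤ m) :
    ∀ᶠ ε in 𝓝[>] 0, witness m ε i j k ∈ exterior m ε := by
  have avoid_B : ∀ᶠ ε in 𝓝[>] 0, ∀ l ∈ Finset.Icc 1 m, witness m ε i j k ∉ translateB m l :=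
    (Filter.eventually_all_finset _).2 fun l hl => eventually_witness_notMem_translateB
      (Finset.mem_Icc.1 hl).1 (Finset.mem_Icc.1 hl).2 hk hkm
  filter_upwards [avoid_B, self_mem_nhdsWithin] with ε hB hε
  exact mem_exterior.2 ⟨fun _ _ => witness_notMem_translateA (by lia) (by lia) hε, hB,
    fun _ hl => witness_notMem_translateC (by lia) (by lia)
      (by linarith [(Finset.mem_Icc.1 hl).2]) (by lia) hε⟩

/-- The indices of the holes. -/
def holes (m : ℕ) : Finset (ℕ × ℕ × ℕ) := Finset.Icc 1 m ×ˢ Finset.Ico 1 m ×ˢ Finset.Icc 1 m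

lemma card_holes (m : ℕ) : (holes m).card = m ^ 2 * (m - 1) := by
  simp only [holes, Finset.card_product, Nat.card_Icc, Nat.card_Ico, Nat.add_sub_cancel]
  ring

lemma mem_holes : (i, j, k) ∈ holes m ↔ (1 ≤ i ∧ i ≤ m) ∧ (1 ≤ j ∧ j < m) ∧ 1 ≤ k ∧ k ≤ m := by
  simp only [holes, Finset.mem_product, Finset.mem_Icc, Finset.mem_Ico]

lemma eventually_forall_holes_witness_mem_exterior (m : ℕ) : ∀ᶠ ε in 𝓝[>] 0, ∀ t ∈ holes m,
    witness m ε t.1 t.2.1 t.2.2 ∈ exterior m ε := by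
  refine (Filter.eventually_all_finset _).2 fun ⟨i, j, k⟩ ht => ?_
  obtain ⟨-, ⟨-, hj⟩, hk, hkm⟩ := mem_holes.1 ht
  exact eventually_witness_mem_exterior hj hk hkm

lemma card_holes_le_mk_connectedComponents (hε : 0 < ε) (hεm : ε ≤ (1 / 2) ^ (m + 1))
    (witness_mem : ∀ t ∈ holes m, witness m ε t.1 t.2.1 t.2.2 ∈ exterior m ε) :
    ((holes m).card : Cardinal) ≤ Cardinal.mk (ConnectedComponents (exterior m ε)) := by
  let U (t : holes m) : Set (exterior m ε) := (↑) ⁻¹' cell m ε t.1.1 t.1.2.1 t.1.2.2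
  let x (t : holes m) : exterior m ε := ⟨_, witness_mem t t.2⟩
  have isClopen_U (t) : IsClopen (U t) := by
    obtain ⟨⟨i, j, k⟩, ht⟩ := t
    obtain ⟨⟨hi, him⟩, ⟨hj, hjm⟩, hk, hkm⟩ := mem_holes.1 ht
    exact isClopen_preimage_val (isOpen_cell ..)
      (disjoint_frontier_cell hi him hj hjm hk hkm hε hεm)
  have x_mem_U (t) : x t ∈ U t := by
    obtain ⟨⟨i, j, k⟩, ht⟩ := t
    obtain ⟨⟨-, him⟩, ⟨-, hjm⟩, -, hkm⟩ := mem_holes.1 ht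
    exact witness_mem_cell him hjm (by lia) hε hεm
  have eq_of_mem (s t) (h : x s ∈ U t) : s = t := by
    obtain ⟨⟨i, j, k⟩, hs⟩ := s
    obtain ⟨⟨i', j', k'⟩, ht⟩ := t
    obtain ⟨⟨-, him⟩, ⟨-, hjm⟩, -, hkm⟩ := mem_holes.1 hs
    obtain ⟨-, ⟨-, hjm'⟩, -, hkm'⟩ := mem_holes.1 ht
    exact Subtype.ext (eq_of_witness_mem_cell him hjm hjm' hkm hkm' hε h)
  rw [← Cardinal.mk_coe_finset]
  exact Cardinal.mk_le_of_injective (injective_connectedComponents_mk isClopen_U x_mem_U eq_of_mem)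

end Witness

end Km

/-- **The construction of Section 3.** For `m ≥ 2` there is `ε₀ > 0` such that for
all `0 < ε < ε₀`, the complement of the union of the `3m` translates
`A_i = K_m + (0,0,−(i/m)ε)`, `B_j = K_m − w(j,0)`, `C_k = K_m + (w(0,k)+w(0,k+1)−u₁)`
has at least `m²(m−1)` connected components. -/
theorem Km_translates_many_holes (m : ℕ) (hm : 2 ≤ m) :
    ∃ ε₀ : ℝ, 0 < ε₀ ∧ ∀ ε : ℝ, 0 < ε → ε < ε₀ →
      ((m ^ 2 * (m - 1) : ℕ) : Cardinal) ≤
        Cardinal.mk (ConnectedComponents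
          ↥(((⋃ i ∈ Finset.Icc 1 m, (![(0 : ℝ), 0, -((i : ℝ) / (m : ℝ)) * ε] +ᵥ Km m)) ∪
             (⋃ j ∈ Finset.Icc 1 m, ((-(wJ j)) +ᵥ Km m)) ∪
             (⋃ k ∈ Finset.Icc 1 m, ((wK m k + wK m (k + 1) - uOne m) +ᵥ Km m)))ᶜ)) := by
  obtain ⟨ε₁, hε₁, witness_mem⟩ := mem_nhdsGT_iff_exists_Ioo_subset.1
    (Km.eventually_forall_holes_witness_mem_exterior m)
  refine ⟨min ε₁ ((1 / 2) ^ (m + 1)), lt_min hε₁ (by positivity), fun ε hε hlt => ?_⟩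
  obtain ⟨hε', hεm⟩ := lt_min_iff.1 hlt
  rw [← Km.card_holes]
  exact Km.card_holes_le_mk_connectedComponents hε hεm.le (witness_mem ⟨hε, hε'⟩)
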